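/- Let ρ be a positive definite d×d density matrix and let (α,z) satisfy 0 < α < 1 and z ≥ max{α, 1−α}. Then the minimum of F_{α,z}(ρ, τ) over all d×d density matrices τ equals λ_min(ρ), the smallest eigenvalue of ρ. (Since every density matrix is the output of some quantum channel applied to any fixed σ, this is the minimum of F_{α,z}(ρ, Φ(σ)) over all quantum channels Φ.) -/

import Mathlib

open Matrix
open scoped ComplexOrder

/-- Real power of a (Hermitian) matrix via functional calculus on eigenvalues,
with `(0:ℝ) ^ t = 0` for `t ≠ 0`. Returns `0` on non-Hermitian input. -/
noncomputable def mpow {d : ℕ} (A : Matrix (Fin d) (Fin d) ℂ) (t : ℝ) :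
    Matrix (Fin d) (Fin d) ℂ :=
  if hA : A.IsHermitian then
    (hA.eigenvectorUnitary : Matrix (Fin d) (Fin d) ℂ) *
      Matrix.diagonal (fun i => ((hA.eigenvalues i ^ t : ℝ) : ℂ)) *
      (star (hA.eigenvectorUnitary : Matrix (Fin d) (Fin d) ℂ))
  else 0

/-- The quantum α-z-fidelity
`F_{α,z}(ρ,σ) = (Tr[(σ^{(1-α)/(2z)} ρ^{α/z} σ^{(1-α)/(2z)})^z])^{1/α}`. -/
noncomputable def Faz {d : ℕ} (ρ σ : Matrix (Fin d) (Fin d) ℂ) (α z : ℝ) : ℝ :=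
  ((mpow (mpow σ ((1 - α) / (2 * z)) * mpow ρ (α / z) * mpow σ ((1 - α) / (2 * z))) z).trace.re)
    ^ (1 / α)

/-- The classical α-fidelity `F_α^C(p,q) = (Σ_i p_i^α q_i^{1-α})^{1/α}`. -/
noncomputable def FazC {d : ℕ} (p q : Fin d → ℝ) (α : ℝ) : ℝ :=
  (∑ i, p i ^ α * q i ^ (1 - α)) ^ (1 / α)

/-- The vector `p` rearranged in increasing order. -/
noncomputable def sortUp {d : ℕ} (p : Fin d → ℝ) : Fin d → ℝ :=
  p ∘ Tuple.sort p

/-- The vector `p` rearranged in decreasing order. -/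
noncomputable def sortDown {d : ℕ} (p : Fin d → ℝ) : Fin d → ℝ :=
  fun i => sortUp p i.rev

/-- `λ↑(A)`: the eigenvalues of a Hermitian matrix in increasing order. -/
noncomputable def eigUp {d : ℕ} {A : Matrix (Fin d) (Fin d) ℂ} (hA : A.IsHermitian) :
    Fin d → ℝ := sortUp hA.eigenvalues

/-- `λ↓(A)`: the eigenvalues of a Hermitian matrix in decreasing order. -/
noncomputable def eigDown {d : ℕ} {A : Matrix (Fin d) (Fin d) ℂ} (hA : A.IsHermitian) :
    Fin d → ℝ := sortDown hA.eigenvalues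

/-!
Let `r` be the smallest eigenvalue of `ρ`. Conjugating `ρ ^ (α / z) ≥ r ^ (α / z)` by
`τ ^ ((1 - α) / (2 * z))` and applying the monotone trace function `X ↦ Tr (X ^ z)` gives
`F(ρ, τ) ^ α ≥ r ^ α * Tr (τ ^ (1 - α)) ≥ r ^ α`, because the eigenvalues of `τ` lie in `[0, 1]`
and sum to `1`. The bound is attained when `τ` projects onto an eigenvector of `ρ` for `r`:
a projection equals its own powers, so the trace collapses to a power of `⟨v, ρ ^ (α / z) v⟩`.
-/

section SymmetricOperators

open scoped InnerProductSpace

variable {𝕜 E : Type*} [RCLike 𝕜] [NormedAddCommGroup E] [InnerProductSpace 𝕜 E]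

lemma exists_ne_zero_forall_inner_eq_zero {ι : Type*} [Fintype ι] (v : ι → E)
    (h : Fintype.card ι < Module.finrank 𝕜 E) : ∃ x : E, x ≠ 0 ∧ ∀ i, ⟪v i, x⟫_𝕜 = 0 := by
  have : FiniteDimensional 𝕜 E := .of_finrank_pos (Nat.zero_lt_of_lt h)
  have hker := LinearMap.ker_ne_bot_of_finrank_lt
    (f := LinearMap.pi fun i => (innerSL 𝕜 (v i)).toLinearMap) (by simpa using h)
  obtain ⟨x, hx, hx0⟩ := Submodule.exists_mem_ne_zero_of_ne_bot hker
  exact ⟨x, hx0, fun i => congrFun hx i⟩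

variable [FiniteDimensional 𝕜 E] {n : ℕ}

lemma re_inner_apply_eq_sum_eigenvalues {T : E →ₗ[𝕜] E} (hT : T.IsSymmetric)
    (hn : Module.finrank 𝕜 E = n) (x : E) :
    RCLike.re ⟪T x, x⟫_𝕜 = ∑ j, hT.eigenvalues hn j * ‖⟪hT.eigenvectorBasis hn j, x⟫_𝕜‖ ^ 2 := by
  have hterm (j : Fin n) : ⟪T x, hT.eigenvectorBasis hn j⟫_𝕜 * ⟪hT.eigenvectorBasis hn j, x⟫_𝕜 =
      ((hT.eigenvalues hn j * ‖⟪hT.eigenvectorBasis hn j, x⟫_𝕜‖ ^ 2 : ℝ) : 𝕜) := by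
    rw [hT, hT.apply_eigenvectorBasis, inner_smul_right, mul_assoc, ← inner_conj_symm x,
      RCLike.conj_mul]
    push_cast
    rfl
  rw [← (hT.eigenvectorBasis hn).sum_inner_mul_inner, Finset.sum_congr rfl fun j _ => hterm j,
    ← RCLike.ofReal_sum, RCLike.ofReal_re]

lemma eigenvalues_mul_norm_sq_le_re_inner {T : E →ₗ[𝕜] E} (hT : T.IsSymmetric)
    (hn : Module.finrank 𝕜 E = n) {i : Fin n} {x : E}
    (hx : ∀ j, i < j → ⟪hT.eigenvectorBasis hn j, x⟫_𝕜 = 0) :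
    hT.eigenvalues hn i * ‖x‖ ^ 2 ≤ RCLike.re ⟪T x, x⟫_𝕜 := by
  rw [re_inner_apply_eq_sum_eigenvalues hT hn, ← (hT.eigenvectorBasis hn).sum_sq_norm_inner_right,
    Finset.mul_sum]
  refine Finset.sum_le_sum fun j _ => ?_
  rcases le_or_gt j i with hji | hij
  · gcongr
    exact hT.eigenvalues_antitone hn hji
  · simp [hx j hij]

lemma re_inner_le_eigenvalues_mul_norm_sq {T : E →ₗ[𝕜] E} (hT : T.IsSymmetric)
    (hn : Module.finrank 𝕜 E = n) {i : Fin n} {x : E}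
    (hx : ∀ j, j < i → ⟪hT.eigenvectorBasis hn j, x⟫_𝕜 = 0) :
    RCLike.re ⟪T x, x⟫_𝕜 ≤ hT.eigenvalues hn i * ‖x‖ ^ 2 := by
  rw [re_inner_apply_eq_sum_eigenvalues hT hn, ← (hT.eigenvectorBasis hn).sum_sq_norm_inner_right,
    Finset.mul_sum]
  refine Finset.sum_le_sum fun j _ => ?_
  rcases le_or_gt i j with hij | hji
  · gcongr
    exact hT.eigenvalues_antitone hn hij
  · simp [hx j hji]

/- A nonzero `x` orthogonal to the eigenvectors of `T` with index `> i` and to those of `S` with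
index `< i` exists because these are only `n - 1` conditions. -/
lemma linearMap_eigenvalues_le_of_le {T S : E →ₗ[𝕜] E} (hT : T.IsSymmetric) (hS : S.IsSymmetric)
    (hn : Module.finrank 𝕜 E = n) (hTS : T ≤ S) (i : Fin n) :
    hT.eigenvalues hn i ≤ hS.eigenvalues hn i := by
  let v : {j // j ≠ i} → E := fun j =>
    if i < j then hT.eigenvectorBasis hn j else hS.eigenvectorBasis hn j
  obtain ⟨x, hx0, hx⟩ := exists_ne_zero_forall_inner_eq_zero (𝕜 := 𝕜) v (by
    rw [hn, Fintype.card_subtype_compl, Fintype.card_fin, Fintype.card_unique]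
    exact Nat.sub_lt i.pos one_pos)
  have hxT (j : Fin n) (hij : i < j) : ⟪hT.eigenvectorBasis hn j, x⟫_𝕜 = 0 := by
    simpa [v, hij] using hx ⟨j, hij.ne'⟩
  have hxS (j : Fin n) (hji : j < i) : ⟪hS.eigenvectorBasis hn j, x⟫_𝕜 = 0 := by
    simpa [v, hji.not_gt] using hx ⟨j, hji.ne⟩
  have hquad : RCLike.re ⟪T x, x⟫_𝕜 ≤ RCLike.re ⟪S x, x⟫_𝕜 := by
    have := hTS.2 x
    rwa [LinearMap.sub_apply, inner_sub_left, map_sub, sub_nonneg] at this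
  refine le_of_mul_le_mul_right ?_ (by positivity : 0 < ‖x‖ ^ 2)
  calc hT.eigenvalues hn i * ‖x‖ ^ 2 ≤ RCLike.re ⟪T x, x⟫_𝕜 :=
        eigenvalues_mul_norm_sq_le_re_inner hT hn hxT
    _ ≤ RCLike.re ⟪S x, x⟫_𝕜 := hquad
    _ ≤ hS.eigenvalues hn i * ‖x‖ ^ 2 := re_inner_le_eigenvalues_mul_norm_sq hS hn hxS

end SymmetricOperators

section FunctionalCalculus

open scoped MatrixOrder

variable {𝕜 n : Type*} [RCLike 𝕜] [Fintype n] [DecidableEq n] {A B : Matrix n n 𝕜}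

lemma matrix_eigenvalues_le_of_le (hA : A.IsHermitian) (hB : B.IsHermitian) (hAB : A ≤ B)
    (i : n) : hA.eigenvalues i ≤ hB.eigenvalues i := by
  refine linearMap_eigenvalues_le_of_le _ _ _ ?_ _
  rw [LinearMap.le_def, ← map_sub, isPositive_toEuclideanLin_iff]
  exact hAB

lemma trace_cfc (hA : A.IsHermitian) (f : ℝ → ℝ) :
    (cfc f A).trace = ((∑ i, f (hA.eigenvalues i) : ℝ) : 𝕜) := by
  rw [hA.cfc_eq, IsHermitian.cfc, Unitary.conjStarAlgAut_apply, trace_mul_cycle,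
    Unitary.coe_star_mul_self, one_mul, trace_diagonal]
  simp

lemma trace_cfc_le_trace_cfc_of_le (hA : A.IsHermitian) (hB : B.IsHermitian) (hAB : A ≤ B)
    {f : ℝ → ℝ} (hf : MonotoneOn f (spectrum ℝ A ∪ spectrum ℝ B)) :
    (cfc f A).trace ≤ (cfc f B).trace := by
  rw [trace_cfc hA, trace_cfc hB, RCLike.ofReal_le_ofReal]
  exact Finset.sum_le_sum fun i _ => hf (.inl (hA.eigenvalues_mem_spectrum_real i))
    (.inr (hB.eigenvalues_mem_spectrum_real i)) (matrix_eigenvalues_le_of_le hA hB hAB i)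

lemma cfc_mulVec_eigenvectorBasis (hA : A.IsHermitian) (f : ℝ → ℝ) (i : n) :
    cfc f A *ᵥ ⇑(hA.eigenvectorBasis i) =
      (f (hA.eigenvalues i) : 𝕜) • ⇑(hA.eigenvectorBasis i) := by
  rw [hA.cfc_eq, IsHermitian.cfc, Unitary.conjStarAlgAut_apply, ← mulVec_mulVec, ← mulVec_mulVec,
    hA.star_eigenvectorUnitary_mulVec, diagonal_mulVec_single, ← hA.eigenvectorUnitary_mulVec,
    ← mulVec_smul, ← Pi.single_smul]
  rfl

lemma star_eigenvectorBasis_dotProduct_self (hA : A.IsHermitian) (i : n) :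
    star ⇑(hA.eigenvectorBasis i) ⬝ᵥ ⇑(hA.eigenvectorBasis i) = 1 := by
  rw [dotProduct_comm, ← EuclideanSpace.inner_eq_star_dotProduct, inner_self_eq_norm_sq_to_K,
    hA.eigenvectorBasis.norm_eq_one]
  simp

end FunctionalCalculus

section RankOneProjections

variable {R n : Type*} [CommSemiring R] [StarRing R] [Fintype n]

lemma isStarProjection_vecMulVec_star {v : n → R} (hv : star v ⬝ᵥ v = 1) :
    IsStarProjection (vecMulVec v (star v)) where
  isIdempotentElem := by
    rw [IsIdempotentElem, vecMulVec_mul_vecMulVec, hv, one_smul]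
  isSelfAdjoint := by
    rw [IsSelfAdjoint, star_eq_conjTranspose, conjTranspose_vecMulVec, star_star]

lemma vecMulVec_star_mul_mul_vecMulVec_star (v : n → R) (M : Matrix n n R) :
    vecMulVec v (star v) * M * vecMulVec v (star v) =
      (star v ⬝ᵥ M *ᵥ v) • vecMulVec v (star v) := by
  rw [mul_assoc, mul_vecMulVec, vecMulVec_mul_vecMulVec, vecMulVec_smul]

end RankOneProjections

section MatrixPower

open scoped MatrixOrder

variable {d : ℕ} {A B P : Matrix (Fin d) (Fin d) ℂ}

lemma mpow_eq_cfc (A : Matrix (Fin d) (Fin d) ℂ) (t : ℝ) :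
    mpow A t = cfc (fun x : ℝ => x ^ t) A := by
  by_cases hA : A.IsHermitian
  · rw [mpow, dif_pos hA, hA.cfc_eq]
    rfl
  · rw [mpow, dif_neg hA]
    exact (cfc_apply_of_not_predicate A hA).symm

lemma trace_mpow (hA : A.IsHermitian) (t : ℝ) :
    (mpow A t).trace = ((∑ i, hA.eigenvalues i ^ t : ℝ) : ℂ) := by
  rw [mpow_eq_cfc, trace_cfc hA]
  rfl

lemma mpow_nonneg (hA : 0 ≤ A) (t : ℝ) : 0 ≤ mpow A t := by
  rw [mpow_eq_cfc]
  exact cfc_nonneg fun x hx => Real.rpow_nonneg (spectrum_nonneg_of_nonneg hA hx) t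

lemma mpow_mpow (hA : 0 ≤ A) (s t : ℝ) : mpow (mpow A s) t = mpow A (s * t) := by
  rw [mpow_eq_cfc A, mpow_eq_cfc, mpow_eq_cfc, ← cfc_comp' _ _ _
    ((finite_real_spectrum.image _).continuousOn _) (finite_real_spectrum.continuousOn _)]
  exact cfc_congr fun x hx => (Real.rpow_mul (spectrum_nonneg_of_nonneg hA hx) s t).symm

lemma mpow_mul_self (hA : 0 ≤ A) (t : ℝ) : mpow A t * mpow A t = mpow A (2 * t) := by
  rw [mpow_eq_cfc, mpow_eq_cfc, ← cfc_mul _ _ _ (finite_real_spectrum.continuousOn _)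
    (finite_real_spectrum.continuousOn _)]
  refine cfc_congr fun x hx => ?_
  rw [two_mul, ← sq, ← mul_two, Real.rpow_mul (spectrum_nonneg_of_nonneg hA hx), Real.rpow_two]

lemma mpow_smul (hA : 0 ≤ A) {c : ℝ} (hc : 0 ≤ c) (t : ℝ) :
    mpow (c • A) t = c ^ t • mpow A t := by
  rw [mpow_eq_cfc, mpow_eq_cfc,
    ← cfc_comp_smul c _ A ((finite_real_spectrum.image _).continuousOn _),
    ← cfc_smul _ _ _ (finite_real_spectrum.continuousOn _)]
  exact cfc_congr fun x hx => Real.mul_rpow hc (spectrum_nonneg_of_nonneg hA hx)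

lemma mpow_of_isStarProjection (hP : IsStarProjection P) {t : ℝ} (ht : t ≠ 0) : mpow P t = P := by
  rw [mpow_eq_cfc]
  conv_rhs => rw [← cfc_id' ℝ P hP.isSelfAdjoint]
  refine cfc_congr fun x hx => ?_
  rcases hP.isIdempotentElem.spectrum_subset ℝ hx with rfl | rfl
  · exact Real.zero_rpow ht
  · exact Real.one_rpow t

lemma smul_one_le_mpow (hA : 0 ≤ A) {r t : ℝ} (hr : 0 ≤ r) (hrA : ∀ x ∈ spectrum ℝ A, r ≤ x)
    (ht : 0 ≤ t) : r ^ t • (1 : Matrix (Fin d) (Fin d) ℂ) ≤ mpow A t := by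
  rw [mpow_eq_cfc, ← Algebra.algebraMap_eq_smul_one]
  exact algebraMap_le_cfc _ _ _ (fun x hx => Real.rpow_le_rpow hr (hrA x hx) ht)
    (finite_real_spectrum.continuousOn _) (.of_nonneg hA)

lemma trace_mpow_le_trace_mpow (hA : 0 ≤ A) (hAB : A ≤ B) {t : ℝ} (ht : 0 ≤ t) :
    (mpow A t).trace ≤ (mpow B t).trace := by
  have hB : 0 ≤ B := hA.trans hAB
  have hspec : spectrum ℝ A ∪ spectrum ℝ B ⊆ Set.Ici 0 :=
    Set.union_subset (fun _ hx => spectrum_nonneg_of_nonneg hA hx)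
      fun _ hx => spectrum_nonneg_of_nonneg hB hx
  rw [mpow_eq_cfc, mpow_eq_cfc]
  exact trace_cfc_le_trace_cfc_of_le (IsSelfAdjoint.of_nonneg hA) (IsSelfAdjoint.of_nonneg hB) hAB
    ((Real.monotoneOn_rpow_Ici_of_exponent_nonneg ht).mono hspec)

lemma one_le_trace_mpow (hA : A.PosSemidef) (htr : A.trace = 1) {t : ℝ} (ht : t ≤ 1) :
    1 ≤ (mpow A t).trace := by
  have hsum : ∑ i, hA.1.eigenvalues i = 1 := by
    apply RCLike.ofReal_injective (K := ℂ)
    rw [RCLike.ofReal_sum, ← hA.1.trace_eq_sum_eigenvalues, htr, RCLike.ofReal_one]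
  have hle_one (i : Fin d) : hA.1.eigenvalues i ≤ 1 :=
    hsum ▸ Finset.single_le_sum (fun j _ => hA.eigenvalues_nonneg j) (Finset.mem_univ i)
  rw [trace_mpow hA.1]
  norm_cast
  rw [← hsum]
  exact Finset.sum_le_sum fun i _ =>
    Real.self_le_rpow_of_le_one (hA.eigenvalues_nonneg i) (hle_one i) ht

end MatrixPower

section Fidelity

open scoped MatrixOrder

variable {d : ℕ} {ρ τ : Matrix (Fin d) (Fin d) ℂ} {α z : ℝ}

lemma rpow_le_trace_mpow_sandwich (hρ : 0 ≤ ρ) (hτ : τ.PosSemidef) (hτ1 : τ.trace = 1)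
    (hα : 0 ≤ α) (hz : 0 < z) {r : ℝ} (hr : 0 ≤ r) (hrρ : ∀ x ∈ spectrum ℝ ρ, r ≤ x) :
    ((r ^ α : ℝ) : ℂ) ≤ (mpow (mpow τ ((1 - α) / (2 * z)) * mpow ρ (α / z) *
      mpow τ ((1 - α) / (2 * z))) z).trace := by
  set S := mpow τ ((1 - α) / (2 * z))
  have hS : 0 ≤ S := mpow_nonneg hτ.nonneg _
  have hS_sq : S * S = mpow τ ((1 - α) / z) := by
    rw [mpow_mul_self hτ.nonneg]
    congr 1
    field_simp
  have hc : 0 ≤ r ^ (α / z) := Real.rpow_nonneg hr _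
  have hle : r ^ (α / z) • mpow τ ((1 - α) / z) ≤ S * mpow ρ (α / z) * S := by
    have := conjugate_le_conjugate_of_nonneg (smul_one_le_mpow hρ hr hrρ (div_nonneg hα hz.le)) hS
    rwa [mul_smul_comm, mul_one, smul_mul_assoc, hS_sq] at this
  calc ((r ^ α : ℝ) : ℂ) ≤ (r ^ α : ℝ) * (mpow τ (1 - α)).trace :=
        le_mul_of_one_le_right (by positivity) (one_le_trace_mpow hτ hτ1 (by linarith))
    _ = (mpow (r ^ (α / z) • mpow τ ((1 - α) / z)) z).trace := by
        rw [mpow_smul (mpow_nonneg hτ.nonneg _) hc, mpow_mpow hτ.nonneg, ← Real.rpow_mul hr,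
          div_mul_cancel₀ _ hz.ne', div_mul_cancel₀ _ hz.ne', trace_smul, Complex.real_smul]
    _ ≤ _ := trace_mpow_le_trace_mpow (smul_nonneg hc (mpow_nonneg hτ.nonneg _)) hle hz.le

lemma le_faz_of_forall_le_spectrum (hρ : 0 ≤ ρ) (hτ : τ.PosSemidef) (hτ1 : τ.trace = 1)
    (hα : 0 < α) (hz : 0 < z) {r : ℝ} (hr : 0 ≤ r) (hrρ : ∀ x ∈ spectrum ℝ ρ, r ≤ x) :
    r ≤ Faz ρ τ α z := by
  have htrace := (Complex.le_def.mp (rpow_le_trace_mpow_sandwich hρ hτ hτ1 hα.le hz hr hrρ)).1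
  rw [Complex.ofReal_re] at htrace
  calc r = (r ^ α) ^ (1 / α) := by rw [one_div, Real.rpow_rpow_inv hr hα.ne']
    _ ≤ Faz ρ τ α z := Real.rpow_le_rpow (by positivity) htrace (by positivity)

lemma faz_vecMulVec_star (hρ : 0 ≤ ρ) (hα : α ≠ 1) (hz : z ≠ 0) {v : Fin d → ℂ}
    (hv : star v ⬝ᵥ v = 1) :
    Faz ρ (vecMulVec v (star v)) α z = (star v ⬝ᵥ mpow ρ (α / z) *ᵥ v).re ^ (z / α) := by
  have hP : IsStarProjection (vecMulVec v (star v)) := isStarProjection_vecMulVec_star hv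
  have hexp : (1 - α) / (2 * z) ≠ 0 :=
    div_ne_zero (sub_ne_zero.mpr hα.symm) (mul_ne_zero two_ne_zero hz)
  obtain ⟨c, hc, hcv⟩ : ∃ c : ℝ, 0 ≤ c ∧ (c : ℂ) = star v ⬝ᵥ mpow ρ (α / z) *ᵥ v :=
    RCLike.nonneg_iff_exists_ofReal.mp ((mpow_nonneg hρ _).posSemidef.dotProduct_mulVec_nonneg v)
  rw [Faz, mpow_of_isStarProjection hP hexp, vecMulVec_star_mul_mul_vecMulVec_star, ← hcv,
    Complex.coe_smul, mpow_smul hP.nonneg hc, mpow_of_isStarProjection hP hz, trace_smul,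
    trace_vecMulVec, dotProduct_comm, hv, Complex.ofReal_re,
    Complex.smul_re, Complex.one_re, smul_eq_mul, mul_one, ← Real.rpow_mul hc, mul_one_div]

lemma faz_eigenvectorBasis (hρ : ρ.PosSemidef) (hα0 : α ≠ 0) (hα : α ≠ 1) (hz : z ≠ 0)
    (i : Fin d) :
    Faz ρ (vecMulVec (hρ.1.eigenvectorBasis i) (star ⇑(hρ.1.eigenvectorBasis i))) α z =
      hρ.1.eigenvalues i := by
  have hv := star_eigenvectorBasis_dotProduct_self hρ.1 i
  have hexp : α / z * (z / α) = 1 := by field_simp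
  rw [faz_vecMulVec_star hρ.nonneg hα hz hv, mpow_eq_cfc, cfc_mulVec_eigenvectorBasis,
    dotProduct_smul, hv, smul_eq_mul, mul_one, ← RCLike.re_eq_complex_re, RCLike.ofReal_re,
    ← Real.rpow_mul (hρ.eigenvalues_nonneg i), hexp, Real.rpow_one]

lemma isLeast_range_sortUp_zero (p : Fin d → ℝ) (hd : 0 < d) :
    IsLeast (Set.range p) (sortUp p ⟨0, hd⟩) := by
  refine ⟨⟨_, rfl⟩, ?_⟩
  rintro _ ⟨i, rfl⟩
  simpa [sortUp] using
    Tuple.monotone_sort p (show ⟨0, hd⟩ ≤ (Tuple.sort p).symm i from Nat.zero_le _)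

lemma isLeast_spectrum_eigUp_zero (hρ : ρ.IsHermitian) (hd : 0 < d) :
    IsLeast (spectrum ℝ ρ) (eigUp hρ ⟨0, hd⟩) := by
  rw [hρ.spectrum_real_eq_range_eigenvalues]
  exact isLeast_range_sortUp_zero hρ.eigenvalues hd

end Fidelity

theorem stmt_13_general {d : ℕ} (hd : 0 < d) {ρ : Matrix (Fin d) (Fin d) ℂ} (hρ : ρ.PosSemidef)
    {α z : ℝ} (hα : α ∈ Set.Ioo (0 : ℝ) 1) (hz : 0 < z) :
    IsLeast {x : ℝ | ∃ τ : Matrix (Fin d) (Fin d) ℂ,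
        τ.PosSemidef ∧ τ.trace = 1 ∧ x = Faz ρ τ α z}
      (eigUp hρ.1 ⟨0, hd⟩) := by
  obtain ⟨hmem, hmin⟩ := isLeast_spectrum_eigUp_zero hρ.1 hd
  obtain ⟨i, hi⟩ := hρ.1.spectrum_real_eq_range_eigenvalues ▸ hmem
  constructor
  · have hv := star_eigenvectorBasis_dotProduct_self hρ.1 i
    refine ⟨_, posSemidef_vecMulVec_self_star ⇑(hρ.1.eigenvectorBasis i), ?_, ?_⟩
    · rw [trace_vecMulVec, dotProduct_comm, hv]
    · rw [faz_eigenvectorBasis hρ hα.1.ne' hα.2.ne hz.ne', hi]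
  · rintro _ ⟨τ, hτ, hτ1, rfl⟩
    have hnonneg : 0 ≤ eigUp hρ.1 ⟨0, hd⟩ := hi ▸ hρ.eigenvalues_nonneg i
    exact le_faz_of_forall_le_spectrum hρ.nonneg hτ hτ1 hα.1 hz hnonneg hmin

/-- for a positive definite density matrix `ρ`, `0 < α < 1` and
`z ≥ max{α, 1−α}`, the minimum of `F_{α,z}(ρ, τ)` over all density matrices `τ`
equals the smallest eigenvalue of `ρ`. -/
theorem stmt_13 {d : ℕ} (hd : 0 < d) (ρ : Matrix (Fin d) (Fin d) ℂ)
    (hρ : ρ.PosDef) (hρ1 : ρ.trace = 1)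
    (α z : ℝ) (hα : α ∈ Set.Ioo (0 : ℝ) 1) (hz : max α (1 - α) ≤ z) :
    IsLeast {x : ℝ | ∃ τ : Matrix (Fin d) (Fin d) ℂ,
        τ.PosSemidef ∧ τ.trace = 1 ∧ x = Faz ρ τ α z}
      (eigUp hρ.1 ⟨0, hd⟩) :=
  stmt_13_general hd hρ.posSemidef hα (hα.1.trans_le ((le_max_left _ _).trans hz))
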